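/- Let T be an exponentially growing rank-one transformation, let I be the unit interval, and set n_m = M_m + 1 where M_m is the maximal height of a descendant of I in column C_m. Then T satisfies the Renyi inequality with constant 2 along the sequence (n_m): for every m, ∫_I (S_{n_m}(1_I))² dμ ≤ 2 (∫_I S_{n_m}(1_I) dμ)², where S_n(1_I) = ∑_{k=0}^{n−1} 1_I ∘ T^k; hence T is subsequence rationally ergodic on I along (n_m). -/

import Mathlib

open MeasureTheory Filter Set Pointwise

/-- A rank-one cutting-and-stacking transformation of a subset `X ⊆ ℝ` (with Lebesgue
measure), given by columns `C n` consisting of `h n` levels (open intervals) of width `w n`,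
with `pos n j` the left endpoint of the level of height `j` in column `C n`; column `C (n+1)`
is obtained from `C n` by cutting into `r n ≥ 2` subcolumns of equal width, adding `s n k`
spacers above the `k`-th subcolumn, and stacking. -/
structure RankOne where
  X : Set ℝ
  T : ℝ ≃ᵐ ℝ
  r : ℕ → ℕ
  s : ℕ → ℕ → ℕ
  h : ℕ → ℕ
  w : ℕ → ℝ
  pos : ℕ → ℕ → ℝ
  hr : ∀ n, 2 ≤ r n
  h0 : h 0 = 1
  w0 : w 0 = 1
  pos0 : pos 0 0 = 0
  hrec : ∀ n, h (n + 1) = ∑ k ∈ Finset.range (r n), (h n + s n k)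
  wrec : ∀ n, w (n + 1) = w n / (r n : ℝ)
  hX : X = ⋃ n, ⋃ j < h n, Set.Ioo (pos n j) (pos n j + w n)
  disj : ∀ n, ∀ j < h n, ∀ j' < h n, j ≠ j' →
    Disjoint (Set.Ioo (pos n j) (pos n j + w n)) (Set.Ioo (pos n j') (pos n j' + w n))
  stack : ∀ n, ∀ j < h n, ∀ k < r n,
    pos (n + 1) ((∑ i ∈ Finset.range k, (h n + s n i)) + j) = pos n j + (k : ℝ) * w (n + 1)
  Tmap : ∀ n j, j + 1 < h n → ∀ x ∈ Set.Ioo (pos n j) (pos n j + w n),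
    T x = x + (pos n (j + 1) - pos n j)
  Tbij : Set.BijOn (⇑T) X X
  Tpres : MeasurePreserving (⇑T) (volume.restrict X) (volume.restrict X)

namespace RankOne

/-- The level of height `j` in column `C n`. -/
def lvl (S : RankOne) (n j : ℕ) : Set ℝ := Set.Ioo (S.pos n j) (S.pos n j + S.w n)

/-- The measure on the space: Lebesgue measure restricted to `X`. -/
noncomputable def μ (S : RankOne) : Measure ℝ := volume.restrict S.X

/-- The intrinsic weight sequence `u n F = μ(F ∩ TⁿF) / μ(F)²`. -/
noncomputable def u (S : RankOne) (F : Set ℝ) (n : ℕ) : ℝ :=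
  (S.μ (F ∩ (⇑S.T)^[n] '' F)).toReal / (S.μ F).toReal ^ 2

/-- `a n F = ∑_{k<n} u k F`. -/
noncomputable def a (S : RankOne) (F : Set ℝ) (n : ℕ) : ℝ :=
  ∑ k ∈ Finset.range n, S.u F k

/-- `T` is normal if spacers are added above the rightmost subcolumn infinitely often. -/
def Normal (S : RankOne) : Prop := ∀ m, ∃ n, m ≤ n ∧ 0 < S.s n (S.r n - 1)

/-- `T` grows exponentially: `2 s_{n, r_n - 1} ≥ h_{n+1}` for every `n`. -/
def ExpGrowing (S : RankOne) : Prop := ∀ n, S.h (n + 1) ≤ 2 * S.s n (S.r n - 1)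

/-- `T` has a bounded number of cuts: `sup r_n < ∞`. -/
def BoundedCuts (S : RankOne) : Prop := ∃ c, ∀ n, S.r n ≤ c

/-- `H n = {0} ∪ {∑_{k≤i} (h n + s n k) : 0 ≤ i < r n - 1}`. -/
def Hset (S : RankOne) (n : ℕ) : Finset ℕ :=
  insert 0 ((Finset.range (S.r n - 1)).image fun i => ∑ k ∈ Finset.range (i + 1), (S.h n + S.s n k))

/-- The set of heights in column `C N` of the descendants of the level of height `p`
in column `C j`: `D(J, N) = p + H j ⊕ H (j+1) ⊕ ⋯ ⊕ H (N-1)`. -/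
def desc (S : RankOne) (j p : ℕ) : ℕ → Finset ℕ
  | 0 => {p}
  | N + 1 => if N < j then {p} else desc S j p N + S.Hset N

/-- `M m`: the maximal height of a descendant of the unit interval `I` in column `C m`. -/
def M (S : RankOne) (m : ℕ) : ℕ := (S.desc 0 0 m).sup id

/-- The ergodic sum `S_n(1_F)(x) = ∑_{k<n} 1_F(T^k x)`. -/
noncomputable def birkhoff (S : RankOne) (F : Set ℝ) (n : ℕ) (x : ℝ) : ℝ :=
  ∑ k ∈ Finset.range n, Set.indicator F (fun _ => (1 : ℝ)) ((⇑S.T)^[k] x)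

/-- `T` is rationally weakly mixing on `F`. -/
def RWMOn (S : RankOne) (F : Set ℝ) : Prop :=
  MeasurableSet F ∧ 0 < S.μ F ∧ S.μ F ≠ ⊤ ∧
  ∀ A B : Set ℝ, MeasurableSet A → A ⊆ F → MeasurableSet B → B ⊆ F →
    Tendsto (fun n => (S.a F n)⁻¹ *
      ∑ k ∈ Finset.range n,
        |(S.μ (A ∩ (⇑S.T)^[k] '' B)).toReal - (S.μ A).toReal * (S.μ B).toReal * S.u F k|)
      atTop (nhds 0)

/-- `T` is rationally weakly mixing. -/
def RWM (S : RankOne) : Prop := ∃ F, S.RWMOn F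

/-- `T` is rationally ergodic: some set `F` of positive finite measure satisfies a
Renyi inequality. -/
def RatErgodic (S : RankOne) : Prop :=
  ∃ (F : Set ℝ) (c : ℝ), MeasurableSet F ∧ 0 < S.μ F ∧ S.μ F ≠ ⊤ ∧
    ∀ n, ∫ x in F, (S.birkhoff F n x) ^ 2 ∂S.μ ≤ c * (∫ x in F, S.birkhoff F n x ∂S.μ) ^ 2

/-- `T` is spectrally weakly mixing: every bounded measurable eigenfunction is a.e. constant. -/
def SpecWM (S : RankOne) : Prop :=
  ∀ (f : ℝ → ℂ) (z : ℂ), Measurable f → (∃ C, ∀ᵐ x ∂S.μ, ‖f x‖ ≤ C) →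
    (∀ᵐ x ∂S.μ, f (S.T x) = z * f x) → ∃ c : ℂ, ∀ᵐ x ∂S.μ, f x = c

/-- `T` is zero-type: `μ(A ∩ TⁿA) → 0` for all `A` of finite measure. -/
def ZeroType (S : RankOne) : Prop :=
  ∀ A : Set ℝ, MeasurableSet A → S.μ A ≠ ⊤ →
    Tendsto (fun n => S.μ (A ∩ (⇑S.T)^[n] '' A)) atTop (nhds 0)

/-- The `i`-th nonzero element of `H n` (for `i < r n - 1`): `e n i = ∑_{k ≤ i} (h n + s n k)`. -/
def e (S : RankOne) (n i : ℕ) : ℕ := ∑ k ∈ Finset.range (i + 1), (S.h n + S.s n k)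

/-- `T` is steep: listing the nonzero elements of `H 0`, then `H 1`, etc., as `t 1, t 2, …`,
each successive element is at least `4` times the previous one. -/
def Steep (S : RankOne) : Prop :=
  (∀ n i, i + 2 < S.r n → 4 * S.e n i ≤ S.e n (i + 1)) ∧
  (∀ n, 4 * S.e n (S.r n - 2) ≤ S.e (n + 1) 0)

/-- `T` is almost steep. -/
def AlmostSteep (S : RankOne) : Prop :=
  ∀ n, 3 ≤ S.r n ∧ S.s n 0 = 0 ∧ S.s n 1 = 1 ∧
    ∀ i, 2 ≤ i → i ≤ S.r n - 1 →
      4 * (∑ k ∈ Finset.range i, (S.h n + S.s n k)) ≤ ∑ k ∈ Finset.range (i + 1), (S.h n + S.s n k)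

/-- `A` is a finite union of levels of `T`. -/
def FinUnionLevels (S : RankOne) (A : Set ℝ) : Prop :=
  ∃ q : Finset (ℕ × ℕ), (∀ v ∈ q, v.2 < S.h v.1) ∧ A = ⋃ v ∈ q, S.lvl v.1 v.2

end RankOne

/-!
Up to a null set, `I` is a union `E` of `L` levels of `C_m`, each of width `w`, with `L * w = 1`.
A point needs at least `h_m` steps to return to a level of `C_m`, so within `n = M_m + 1 ≤ h_m`
steps it visits each level of `E` at most once: `S_n(1_E) ≤ L`. Conversely, of two levels of `E`
the points of the lower one reach the upper one within `M_m` steps, so summing over all ordered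
pairs of levels gives `∫_E S_n(1_E) ≥ w * L² / 2 = L / 2`. Hence
`∫_E S_n(1_E)² ≤ L * ∫_E S_n(1_E) ≤ 2 * (∫_E S_n(1_E))²`.
-/

theorem Ioo_ae_eq_biUnion_Ioo_of_monotone {α : Type*} [LinearOrder α] [MeasurableSpace α]
    (μ : Measure α) [NullSingletonClass μ] {f : ℕ → α} (hf : Monotone f) (n : ℕ) :
    Ioo (f 0) (f n) =ᵐ[μ] ⋃ k ∈ Finset.range n, Ioo (f k) (f (k + 1)) := by
  have cover : ⋃ k ∈ Finset.range n, Ioc (f k) (f (k + 1)) = Ioc (f 0) (f n) := by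
    rw [← hf.biUnion_Ico_Ioc_map_succ 0 n]
    simp
  have hIoc : Ioo (f 0) (f n) =ᵐ[μ] ⋃ k ∈ Finset.range n, Ioc (f k) (f (k + 1)) := by
    rw [cover]
    exact Ioo_ae_eq_Ioc
  exact hIoc.trans (Finset.eventuallyEq_iUnion _ fun _ _ => Ioo_ae_eq_Ioc.symm)

namespace RankOne

variable (S : RankOne)

/-! ### Columns and levels -/

/-- The height in column `C (n+1)` of the bottom level of the `k`-th subcolumn of `C n`; for
`k = r n` this is the total height `h (n+1)`. -/
def subcolumnBase (n k : ℕ) : ℕ := ∑ i ∈ Finset.range k, (S.h n + S.s n i)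

/-- The union of the levels of column `C m` whose heights lie in `A`. -/
def levelUnion (m : ℕ) (A : Finset ℕ) : Set ℝ := ⋃ d ∈ A, S.lvl m d

theorem r_pos (n : ℕ) : 0 < S.r n :=
  zero_lt_two.trans_le (S.hr n)

theorem h_pos (n : ℕ) : 0 < S.h n := by
  induction n with
  | zero => simp [S.h0]
  | succ n ih =>
    rw [S.hrec]
    exact Finset.sum_pos (fun k _ => Nat.add_pos_left ih _) ⟨0, Finset.mem_range.2 (S.r_pos n)⟩

theorem w_pos (n : ℕ) : 0 < S.w n := by
  induction n with
  | zero => simp [S.w0]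
  | succ n ih =>
    rw [S.wrec]
    exact div_pos ih (Nat.cast_pos.2 (S.r_pos n))

theorem r_mul_w_succ (n : ℕ) : (S.r n : ℝ) * S.w (n + 1) = S.w n := by
  rw [S.wrec, mul_div_cancel₀ _ (Nat.cast_ne_zero.2 (S.r_pos n).ne')]

theorem subcolumnBase_add_lt {n k d : ℕ} (hk : k < S.r n) (hd : d < S.h n) :
    S.subcolumnBase n k + d < S.h (n + 1) :=
  calc S.subcolumnBase n k + d < S.subcolumnBase n k + (S.h n + S.s n k) := by lia
    _ = S.subcolumnBase n (k + 1) := (Finset.sum_range_succ _ k).symm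
    _ ≤ S.subcolumnBase n (S.r n) :=
      Finset.sum_le_sum_of_subset (Finset.range_subset_range.2 hk)
    _ = S.h (n + 1) := (S.hrec n).symm

theorem measurableSet_lvl (n j : ℕ) : MeasurableSet (S.lvl n j) :=
  measurableSet_Ioo

theorem measurableSet_levelUnion (m : ℕ) (A : Finset ℕ) : MeasurableSet (S.levelUnion m A) :=
  A.measurableSet_biUnion fun d _ => S.measurableSet_lvl m d

theorem pairwiseDisjoint_lvl {m : ℕ} {A : Finset ℕ} (hA : ∀ d ∈ A, d < S.h m) :
    (A : Set ℕ).PairwiseDisjoint (S.lvl m) :=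
  fun d hd d' hd' hne => S.disj m d (hA d hd) d' (hA d' hd') hne

theorem lvl_subset_X {n j : ℕ} (hj : j < S.h n) : S.lvl n j ⊆ S.X := by
  rw [S.hX]
  exact fun x hx => mem_iUnion.2 ⟨n, mem_iUnion₂.2 ⟨j, hj, hx⟩⟩

theorem μ_lvl {n j : ℕ} (hj : j < S.h n) : S.μ (S.lvl n j) = ENNReal.ofReal (S.w n) := by
  rw [μ, Measure.restrict_eq_self _ (S.lvl_subset_X hj), lvl, Real.volume_Ioo, add_sub_cancel_left]

theorem μ_real_lvl {n j : ℕ} (hj : j < S.h n) : S.μ.real (S.lvl n j) = S.w n := by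
  rw [measureReal_def, S.μ_lvl hj, ENNReal.toReal_ofReal (S.w_pos n).le]

theorem μ_lvl_ne_top {n j : ℕ} (hj : j < S.h n) : S.μ (S.lvl n j) ≠ ⊤ := by
  rw [S.μ_lvl hj]
  exact ENNReal.ofReal_ne_top

theorem μ_levelUnion_ne_top {m : ℕ} {A : Finset ℕ} (hA : ∀ d ∈ A, d < S.h m) :
    S.μ (S.levelUnion m A) ≠ ⊤ :=
  ((measure_biUnion_finset_le A (S.lvl m)).trans_lt
    (ENNReal.sum_lt_top.2 fun d hd => (S.μ_lvl_ne_top (hA d hd)).lt_top)).ne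

theorem μ_real_levelUnion {m : ℕ} {A : Finset ℕ} (hA : ∀ d ∈ A, d < S.h m) :
    S.μ.real (S.levelUnion m A) = A.card * S.w m := by
  rw [levelUnion, measureReal_biUnion_finset (S.pairwiseDisjoint_lvl hA)
    (fun d _ => S.measurableSet_lvl m d) (fun d hd => S.μ_lvl_ne_top (hA d hd)),
    Finset.sum_congr rfl fun d hd => S.μ_real_lvl (hA d hd), Finset.sum_const, nsmul_eq_mul]

/-! ### Descendants -/

theorem Hset_eq_image_subcolumnBase (n : ℕ) :
    S.Hset n = (Finset.range (S.r n)).image (S.subcolumnBase n) := by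
  obtain ⟨q, hq⟩ : ∃ q, S.r n = q + 1 := Nat.exists_eq_add_one.2 (S.r_pos n)
  rw [hq, Finset.range_add_one', Finset.image_insert, Finset.map_eq_image, Finset.image_image,
    Hset, hq]
  rfl

theorem desc_self (j p : ℕ) : S.desc j p j = {p} := by
  cases j <;> simp [desc]

theorem desc_succ {j m : ℕ} (p : ℕ) (hjm : j ≤ m) :
    S.desc j p (m + 1) = S.desc j p m + S.Hset m := by
  rw [desc, if_neg hjm.not_gt]

theorem le_of_mem_desc {j p m d : ℕ} (hjm : j ≤ m) (hd : d ∈ S.desc j p m) : p ≤ d := by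
  induction m, hjm using Nat.le_induction generalizing d with
  | base => rw [desc_self, Finset.mem_singleton] at hd; exact hd.ge
  | succ m hjm ih =>
    rw [S.desc_succ p hjm, Finset.mem_add] at hd
    obtain ⟨d', hd', b, -, rfl⟩ := hd
    exact (ih hd').trans (Nat.le_add_right _ _)

theorem lt_of_mem_desc {j p m d : ℕ} (hp : p < S.h j) (hjm : j ≤ m) (hd : d ∈ S.desc j p m) :
    d < S.h m := by
  induction m, hjm using Nat.le_induction generalizing d with
  | base => rw [desc_self, Finset.mem_singleton] at hd; rwa [hd]
  | succ m hjm ih =>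
    rw [S.desc_succ p hjm, Hset_eq_image_subcolumnBase, Finset.mem_add] at hd
    obtain ⟨d', hd', b, hb, rfl⟩ := hd
    obtain ⟨k, hk, rfl⟩ := Finset.mem_image.1 hb
    rw [add_comm]
    exact S.subcolumnBase_add_lt (Finset.mem_range.1 hk) (ih hd')

theorem le_M_of_mem_desc {m d : ℕ} (hd : d ∈ S.desc 0 0 m) : d ≤ S.M m :=
  Finset.le_sup (f := id) hd

theorem M_lt_h (m : ℕ) : S.M m < S.h m :=
  (Finset.sup_lt_iff (S.h_pos m)).2 fun _ => S.lt_of_mem_desc (S.h_pos 0) m.zero_le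

theorem lvl_ae_eq_biUnion_lvl_succ {m d : ℕ} (hd : d < S.h m) :
    S.lvl m d =ᵐ[volume] ⋃ k ∈ Finset.range (S.r m), S.lvl (m + 1) (S.subcolumnBase m k + d) := by
  let cut (k : ℕ) : ℝ := S.pos m d + k * S.w (m + 1)
  have cut_mono : Monotone cut := fun k l hkl => by
    have := (S.w_pos (m + 1)).le
    dsimp only [cut]
    gcongr
  have lvl_eq : S.lvl m d = Ioo (cut 0) (cut (S.r m)) := by
    simp [cut, lvl, S.r_mul_w_succ]
  have lvl_succ_eq : ∀ k ∈ Finset.range (S.r m),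
      S.lvl (m + 1) (S.subcolumnBase m k + d) = Ioo (cut k) (cut (k + 1)) := fun k hk => by
    rw [lvl, subcolumnBase, S.stack m d hd k (Finset.mem_range.1 hk)]
    simp only [cut, Nat.cast_add_one, add_one_mul, add_assoc]
  rw [lvl_eq, iUnion₂_congr lvl_succ_eq]
  exact Ioo_ae_eq_biUnion_Ioo_of_monotone volume cut_mono _

theorem levelUnion_ae_eq_levelUnion_succ {m : ℕ} {A : Finset ℕ} (hA : ∀ d ∈ A, d < S.h m) :
    S.levelUnion m A =ᵐ[volume] S.levelUnion (m + 1) (A + S.Hset m) := by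
  have split : S.levelUnion (m + 1) (A + S.Hset m) =
      ⋃ d ∈ A, ⋃ k ∈ Finset.range (S.r m), S.lvl (m + 1) (S.subcolumnBase m k + d) := by
    ext x
    simp only [levelUnion, Hset_eq_image_subcolumnBase, Finset.mem_add, Finset.mem_image,
      mem_iUnion, exists_prop]
    constructor
    · rintro ⟨_, ⟨d, hd, _, ⟨k, hk, rfl⟩, rfl⟩, hx⟩
      exact ⟨d, hd, k, hk, add_comm d _ ▸ hx⟩
    · rintro ⟨d, hd, k, hk, hx⟩
      exact ⟨_, ⟨d, hd, _, ⟨k, hk, rfl⟩, add_comm d _⟩, hx⟩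
  rw [split]
  exact Finset.eventuallyEq_iUnion A fun d hd => S.lvl_ae_eq_biUnion_lvl_succ (hA d hd)

theorem lvl_ae_eq_levelUnion_desc {j p m : ℕ} (hp : p < S.h j) (hjm : j ≤ m) :
    S.lvl j p =ᵐ[volume] S.levelUnion m (S.desc j p m) := by
  induction m, hjm using Nat.le_induction with
  | base =>
    rw [desc_self, levelUnion, Finset.set_biUnion_singleton]
    exact .rfl
  | succ m hjm ih =>
    rw [S.desc_succ p hjm]
    exact ih.trans (S.levelUnion_ae_eq_levelUnion_succ fun d hd => S.lt_of_mem_desc hp hjm hd)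

/-! ### Orbits through a column -/

theorem add_mem_lvl {m d : ℕ} {x : ℝ} (hx : x ∈ S.lvl m d) (d' : ℕ) :
    x + (S.pos m d' - S.pos m d) ∈ S.lvl m d' := by
  simp only [lvl, mem_Ioo] at hx ⊢
  constructor <;> linarith

theorem iterate_eq_add {m d k : ℕ} {x : ℝ} (hx : x ∈ S.lvl m d) (hk : d + k < S.h m) :
    S.T^[k] x = x + (S.pos m (d + k) - S.pos m d) := by
  induction k with
  | zero => simp
  | succ k ih =>
    have hstep : S.T^[k] x ∈ S.lvl m (d + k) := by
      rw [ih (by lia)]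
      exact S.add_mem_lvl hx _
    rw [Function.iterate_succ_apply', S.Tmap m (d + k) hk _ hstep, ih (by lia), ← add_assoc d k 1]
    ring

theorem iterate_mem_lvl {m d k : ℕ} {x : ℝ} (hx : x ∈ S.lvl m d) (hk : d + k < S.h m) :
    S.T^[k] x ∈ S.lvl m (d + k) := by
  rw [S.iterate_eq_add hx hk]
  exact S.add_mem_lvl hx _

theorem exists_iterate_eq_of_mem_lvl {m d : ℕ} {x : ℝ} (hd : d < S.h m) (hx : x ∈ S.lvl m d) :
    ∃ v ∈ S.lvl m 0, S.T^[d] v = x := by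
  have hv := S.add_mem_lvl hx 0
  refine ⟨_, hv, ?_⟩
  rw [S.iterate_eq_add hv (by lia), zero_add]
  ring

-- Pulling the orbit back to the bottom level of `C m` keeps its first `h m` steps inside `C m`.
theorem iterate_notMem_lvl {m d i : ℕ} {x : ℝ} (hd : d < S.h m) (hx : x ∈ S.lvl m d)
    (hi : 0 < i) (hih : i < S.h m) : S.T^[i] x ∉ S.lvl m d := by
  intro hreturn
  obtain ⟨v, hv, rfl⟩ := S.exists_iterate_eq_of_mem_lvl hd hx
  obtain ⟨v', hv', hvv'⟩ := S.exists_iterate_eq_of_mem_lvl hd hreturn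
  have bottom_return : v' = S.T^[i] v := by
    apply S.T.injective.iterate d
    rw [hvv', ← Function.iterate_add_apply, ← Function.iterate_add_apply, add_comm]
  have climbed : S.T^[i] v ∈ S.lvl m i := by
    simpa only [zero_add] using S.iterate_mem_lvl hv (by lia)
  exact disjoint_left.1 (S.disj m 0 (S.h_pos m) i hih hi.ne) (bottom_return ▸ hv') climbed

/-! ### Ergodic sums -/

theorem birkhoff_nonneg (F : Set ℝ) (n : ℕ) (x : ℝ) : 0 ≤ S.birkhoff F n x :=
  Finset.sum_nonneg fun _ _ => indicator_nonneg (fun _ _ => zero_le_one) _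

theorem birkhoff_le (F : Set ℝ) (n : ℕ) (x : ℝ) : S.birkhoff F n x ≤ n :=
  calc S.birkhoff F n x ≤ ∑ _k ∈ Finset.range n, (1 : ℝ) :=
        Finset.sum_le_sum fun _ _ => indicator_le_self' (fun _ _ => zero_le_one) _
    _ = n := by simp

theorem one_le_birkhoff {F : Set ℝ} {n k : ℕ} {x : ℝ} (hk : k < n) (hx : S.T^[k] x ∈ F) :
    1 ≤ S.birkhoff F n x :=
  calc (1 : ℝ) = F.indicator (fun _ => 1) (S.T^[k] x) := by rw [indicator_of_mem hx]
    _ ≤ S.birkhoff F n x :=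
      Finset.single_le_sum (f := fun k => F.indicator (fun _ => (1 : ℝ)) (S.T^[k] x))
        (fun _ _ => indicator_nonneg (fun _ _ => zero_le_one) _) (Finset.mem_range.2 hk)

open scoped Classical in
theorem birkhoff_eq_card (F : Set ℝ) (n : ℕ) (x : ℝ) :
    S.birkhoff F n x = ((Finset.range n).filter fun k => S.T^[k] x ∈ F).card := by
  simp only [birkhoff, indicator_apply, Finset.sum_boole]

theorem measurable_birkhoff {F : Set ℝ} (hF : MeasurableSet F) (n : ℕ) :
    Measurable (S.birkhoff F n) :=
  Finset.measurable_fun_sum _ fun k _ =>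
    (measurable_const.indicator hF).comp (S.T.measurable.iterate k)

theorem integrableOn_birkhoff {F B : Set ℝ} (hF : MeasurableSet F) (hB : S.μ B ≠ ⊤) (n : ℕ) :
    IntegrableOn (S.birkhoff F n) B S.μ :=
  Measure.integrableOn_of_bounded hB (S.measurable_birkhoff hF n).aestronglyMeasurable
    (.of_forall fun x => by
      rw [Real.norm_of_nonneg (S.birkhoff_nonneg F n x)]
      exact S.birkhoff_le F n x)

theorem birkhoff_ae_eq {F G : Set ℝ} (hFG : F =ᵐ[S.μ] G) (n : ℕ) :
    S.birkhoff F n =ᵐ[S.μ] S.birkhoff G n := by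
  have hiter (k : ℕ) : ∀ᵐ x ∂S.μ, (S.T^[k] x ∈ F) = (S.T^[k] x ∈ G) :=
    (S.Tpres.iterate k).quasiMeasurePreserving.preimage_ae_eq hFG
  filter_upwards [ae_all_iff.2 hiter] with x hx
  classical
  simp only [birkhoff, indicator_apply, hx]

theorem birkhoff_levelUnion {m : ℕ} {A : Finset ℕ} (hA : ∀ d ∈ A, d < S.h m) (n : ℕ) (x : ℝ) :
    S.birkhoff (S.levelUnion m A) n x = ∑ d ∈ A, S.birkhoff (S.lvl m d) n x := by
  simp only [birkhoff, levelUnion,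
    Finset.indicator_biUnion_apply A (S.lvl m) (S.pairwiseDisjoint_lvl hA)]
  exact Finset.sum_comm

theorem birkhoff_lvl_le_one {m d n : ℕ} (hd : d < S.h m) (hn : n ≤ S.h m) (x : ℝ) :
    S.birkhoff (S.lvl m d) n x ≤ 1 := by
  classical
  have no_return {k l : ℕ} (hkl : k < l) (hl : l < n) (hk : S.T^[k] x ∈ S.lvl m d) :
      S.T^[l] x ∉ S.lvl m d := by
    have := S.iterate_notMem_lvl hd hk (Nat.sub_pos_of_lt hkl) (by lia)
    rwa [← Function.iterate_add_apply, Nat.sub_add_cancel hkl.le] at this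
  rw [birkhoff_eq_card, Nat.cast_le_one, Finset.card_le_one]
  simp only [Finset.mem_filter, Finset.mem_range]
  rintro k ⟨hkn, hk⟩ l ⟨hln, hl⟩
  rcases lt_trichotomy k l with hkl | hkl | hlk
  · exact absurd hl (no_return hkl hln hk)
  · exact hkl
  · exact absurd hk (no_return hlk hkn hl)

theorem birkhoff_levelUnion_le_card {m n : ℕ} {A : Finset ℕ} (hA : ∀ d ∈ A, d < S.h m)
    (hn : n ≤ S.h m) (x : ℝ) : S.birkhoff (S.levelUnion m A) n x ≤ A.card := by
  rw [S.birkhoff_levelUnion hA]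
  simpa using Finset.sum_le_card_nsmul A _ 1 fun d hd => S.birkhoff_lvl_le_one (hA d hd) hn x

/-! ### The Renyi inequality -/

theorem w_le_setIntegral_birkhoff_lvl {m d y n : ℕ} (hdy : d ≤ y) (hy : y < S.h m)
    (hyn : y < d + n) : S.w m ≤ ∫ x in S.lvl m d, S.birkhoff (S.lvl m y) n x ∂S.μ := by
  have hd : d < S.h m := hdy.trans_lt hy
  have visit : ∀ x ∈ S.lvl m d, 1 ≤ S.birkhoff (S.lvl m y) n x := fun x hx =>
    S.one_le_birkhoff (k := y - d) (by lia) <| by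
      simpa only [Nat.add_sub_cancel' hdy] using S.iterate_mem_lvl (k := y - d) hx (by lia)
  have := setIntegral_ge_of_const_le_real (S.measurableSet_lvl m d) (S.μ_lvl_ne_top hd) visit
    (S.integrableOn_birkhoff (S.measurableSet_lvl m y) (S.μ_lvl_ne_top hd) n)
  rwa [S.μ_real_lvl hd, one_mul] at this

theorem setIntegral_levelUnion {m : ℕ} {A : Finset ℕ} {f : ℝ → ℝ} (hA : ∀ d ∈ A, d < S.h m)
    (hf : ∀ d ∈ A, IntegrableOn f (S.lvl m d) S.μ) :
    ∫ x in S.levelUnion m A, f x ∂S.μ = ∑ d ∈ A, ∫ x in S.lvl m d, f x ∂S.μ :=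
  integral_biUnion_finset A (fun d _ => S.measurableSet_lvl m d) (S.pairwiseDisjoint_lvl hA) hf

theorem setIntegral_birkhoff_levelUnion {m : ℕ} {A : Finset ℕ} (hA : ∀ d ∈ A, d < S.h m) (n : ℕ) :
    ∫ x in S.levelUnion m A, S.birkhoff (S.levelUnion m A) n x ∂S.μ =
      ∑ d ∈ A, ∑ y ∈ A, ∫ x in S.lvl m d, S.birkhoff (S.lvl m y) n x ∂S.μ := by
  have hint (d : ℕ) (hd : d ∈ A) {F : Set ℝ} (hF : MeasurableSet F) :
      IntegrableOn (S.birkhoff F n) (S.lvl m d) S.μ :=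
    S.integrableOn_birkhoff hF (S.μ_lvl_ne_top (hA d hd)) n
  rw [S.setIntegral_levelUnion hA fun d hd => hint d hd (S.measurableSet_levelUnion m A)]
  refine Finset.sum_congr rfl fun d hd => ?_
  simp only [S.birkhoff_levelUnion hA]
  exact integral_finsetSum A fun y _ => hint d hd (S.measurableSet_lvl m y)

theorem card_sq_mul_w_le_two_mul_setIntegral_birkhoff {m n : ℕ} {A : Finset ℕ}
    (hA : ∀ d ∈ A, d < S.h m) (hAn : ∀ d ∈ A, ∀ y ∈ A, y < d + n) :
    (A.card : ℝ) ^ 2 * S.w m ≤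
      2 * ∫ x in S.levelUnion m A, S.birkhoff (S.levelUnion m A) n x ∂S.μ := by
  rw [S.setIntegral_birkhoff_levelUnion hA]
  set c : ℕ → ℕ → ℝ := fun d y => ∫ x in S.lvl m d, S.birkhoff (S.lvl m y) n x ∂S.μ
  have c_nonneg (d y : ℕ) : 0 ≤ c d y := integral_nonneg (S.birkhoff_nonneg _ n)
  have w_le_symm : ∀ d ∈ A, ∀ y ∈ A, S.w m ≤ c d y + c y d := fun d hd y hy => by
    rcases le_total d y with hdy | hyd
    · exact le_add_of_le_of_nonneg
        (S.w_le_setIntegral_birkhoff_lvl hdy (hA y hy) (hAn d hd y hy)) (c_nonneg y d)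
    · exact le_add_of_nonneg_of_le (c_nonneg d y)
        (S.w_le_setIntegral_birkhoff_lvl hyd (hA d hd) (hAn y hy d hd))
  calc (A.card : ℝ) ^ 2 * S.w m
      = ∑ _d ∈ A, ∑ _y ∈ A, S.w m := by
        simp only [Finset.sum_const, nsmul_eq_mul]
        ring
    _ ≤ ∑ d ∈ A, ∑ y ∈ A, (c d y + c y d) :=
      Finset.sum_le_sum fun d hd => Finset.sum_le_sum fun y hy => w_le_symm d hd y hy
    _ = ∑ d ∈ A, ∑ y ∈ A, c d y + ∑ d ∈ A, ∑ y ∈ A, c y d := by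
      simp only [Finset.sum_add_distrib]
    _ = 2 * ∑ d ∈ A, ∑ y ∈ A, c d y := by
      rw [Finset.sum_comm (f := fun d y => c y d), two_mul]

theorem setIntegral_birkhoff_levelUnion_sq_le {m n : ℕ} {A : Finset ℕ} (hA : ∀ d ∈ A, d < S.h m)
    (hn : n ≤ S.h m) :
    ∫ x in S.levelUnion m A, S.birkhoff (S.levelUnion m A) n x ^ 2 ∂S.μ ≤
      A.card * ∫ x in S.levelUnion m A, S.birkhoff (S.levelUnion m A) n x ∂S.μ := by
  have hint := S.integrableOn_birkhoff (S.measurableSet_levelUnion m A)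
    (S.μ_levelUnion_ne_top hA) n
  rw [← integral_const_mul]
  refine integral_mono_of_nonneg (.of_forall fun x => sq_nonneg _) (hint.const_mul _)
    (.of_forall fun x => ?_)
  dsimp only
  rw [sq]
  exact mul_le_mul_of_nonneg_right (S.birkhoff_levelUnion_le_card hA hn x)
    (S.birkhoff_nonneg _ n x)

theorem renyi_inequality_levelUnion {m n : ℕ} {A : Finset ℕ} (hA : ∀ d ∈ A, d < S.h m)
    (hAn : ∀ d ∈ A, ∀ y ∈ A, y < d + n) (hn : n ≤ S.h m) :
    S.μ.real (S.levelUnion m A) *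
        ∫ x in S.levelUnion m A, S.birkhoff (S.levelUnion m A) n x ^ 2 ∂S.μ ≤
      2 * (∫ x in S.levelUnion m A, S.birkhoff (S.levelUnion m A) n x ∂S.μ) ^ 2 := by
  have second_moment_le := S.setIntegral_birkhoff_levelUnion_sq_le hA hn
  have le_first_moment := S.card_sq_mul_w_le_two_mul_setIntegral_birkhoff hA hAn
  rw [S.μ_real_levelUnion hA]
  set E := S.levelUnion m A
  set I₁ := ∫ x in E, S.birkhoff E n x ∂S.μ
  have I₁_nonneg : 0 ≤ I₁ := integral_nonneg (S.birkhoff_nonneg E n)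
  have w_nonneg := (S.w_pos m).le
  calc A.card * S.w m * ∫ x in E, S.birkhoff E n x ^ 2 ∂S.μ
      ≤ A.card * S.w m * (A.card * I₁) := by gcongr
    _ = A.card ^ 2 * S.w m * I₁ := by ring
    _ ≤ 2 * I₁ * I₁ := by gcongr
    _ = 2 * I₁ ^ 2 := by ring

theorem setIntegral_birkhoff_pow_congr {F G : Set ℝ} (hFG : F =ᵐ[S.μ] G) (n q : ℕ) :
    ∫ x in F, S.birkhoff F n x ^ q ∂S.μ = ∫ x in G, S.birkhoff G n x ^ q ∂S.μ := by
  rw [setIntegral_congr_set hFG]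
  refine integral_congr_ae (ae_restrict_of_ae ?_)
  filter_upwards [S.birkhoff_ae_eq hFG n] with x hx
  rw [hx]

end RankOne

theorem statement4_general (S : RankOne) {j p m n : ℕ} (hp : p < S.h j) (hjm : j ≤ m)
    (hdesc : ∀ d ∈ S.desc j p m, d < p + n) (hn : n ≤ S.h m) :
    S.μ.real (S.lvl j p) * ∫ x in S.lvl j p, (S.birkhoff (S.lvl j p) n x) ^ 2 ∂S.μ
      ≤ 2 * (∫ x in S.lvl j p, S.birkhoff (S.lvl j p) n x ∂S.μ) ^ 2 := by
  have hae : S.lvl j p =ᵐ[S.μ] S.levelUnion m (S.desc j p m) :=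
    ae_restrict_of_ae (S.lvl_ae_eq_levelUnion_desc hp hjm)
  have first_moment := S.setIntegral_birkhoff_pow_congr hae n 1
  simp only [pow_one] at first_moment
  rw [measureReal_congr hae, S.setIntegral_birkhoff_pow_congr hae n 2, first_moment]
  refine S.renyi_inequality_levelUnion (fun d => S.lt_of_mem_desc hp hjm) ?_ hn
  intro d hd y hy
  exact (hdesc y hy).trans_le (Nat.add_le_add_right (S.le_of_mem_desc hjm hd) n)

/-- An exponentially growing rank-one transformation satisfies the Renyi
inequality with constant `2` along the sequence `n_m = M_m + 1`:
`∫_I (S_{n_m}(1_I))² dμ ≤ 2 (∫_I S_{n_m}(1_I) dμ)²` for every `m`; hence `T` is subsequence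
rationally ergodic on `I` along `(n_m)`. -/
theorem statement4 (S : RankOne) (hexp : S.ExpGrowing) (m : ℕ) :
    ∫ x in S.lvl 0 0, (S.birkhoff (S.lvl 0 0) (S.M m + 1) x) ^ 2 ∂S.μ
      ≤ 2 * (∫ x in S.lvl 0 0, S.birkhoff (S.lvl 0 0) (S.M m + 1) x ∂S.μ) ^ 2 := by
  simpa [S.μ_real_lvl (S.h_pos 0), S.w0] using statement4_general S (S.h_pos 0) m.zero_le
    (fun d hd => by have := S.le_M_of_mem_desc hd; lia) (S.M_lt_h m)
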